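/- Let (X, 𝒜, μ) be a σ-finite measure space, let p_E, p_θ, p_α : X → [0,∞) be densities (measurable with ∫ p dμ = 1), let ω ∈ (0,1), and set p_ω := ω·p_θ + (1−ω)·p_α. With the convention 0·log 0 = 0, the optimal value V(D*) := ∫ p_E·log(p_E/(p_E+p_ω)) dμ + ∫ p_ω·log(p_ω/(p_E+p_ω)) dμ satisfies V(D*) ≥ −log 4, and V(D*) = −log 4 if and only if p_E = p_ω μ-almost everywhere. -/

import Mathlib

/-!
STATEMENT 6 (Lemma 2 of Triple-GAIL): with densities `p_E, p_θ, p_α`,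
`ω ∈ (0,1)` and `p_ω = ω·p_θ + (1−ω)·p_α`, the optimal value
`V(D*) = ∫ p_E·log(p_E/(p_E+p_ω)) dμ + ∫ p_ω·log(p_ω/(p_E+p_ω)) dμ`
satisfies `V(D*) ≥ −log 4`, with equality iff `p_E = p_ω` μ-a.e.
(The convention `0·log 0 = 0` holds definitionally, since `Real.log 0 = 0`
and `x / 0 = 0` in Lean.)
-/

open MeasureTheory


/-!
Up to sign, the integrand of the optimal value at a point where the two densities take the values
`a` and `b` is `a + b` times the binary entropy of `a / (a + b)`. The entropy is at most `log 2`,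
with equality only at `1 / 2`, that is, for `a = b`; integrating, the total mass `2` of the two
densities gives the bound `-2 log 2 = -log 4` and its equality case.
-/

section Pointwise

variable {a b : ℝ}

lemma mul_log_div_add_add_mul_log_div_add (a b : ℝ) :
    a * Real.log (a / (a + b)) + b * Real.log (b / (a + b)) =
      -((a + b) * Real.binEntropy (a / (a + b))) := by
  by_cases h : a + b = 0
  · simp [h]
  · have hb : 1 - a / (a + b) = b / (a + b) := by field_simp; ring
    rw [Real.binEntropy, hb, Real.log_inv, Real.log_inv]
    field_simp
    ring

lemma add_mul_binEntropy_eq_add_mul_log_two_iff (ha : 0 ≤ a) (hb : 0 ≤ b) :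
    (a + b) * Real.binEntropy (a / (a + b)) = (a + b) * Real.log 2 ↔ a = b := by
  rcases (add_nonneg ha hb).eq_or_lt' with h | h
  · obtain ⟨rfl, rfl⟩ := (add_eq_zero_iff_of_nonneg ha hb).1 h
    simp
  · rw [mul_right_inj' h.ne', Real.binEntropy_eq_log_two, div_eq_iff h.ne']
    constructor <;> intro <;> linarith

lemma abs_mul_log_div_add_le (ha : 0 ≤ a) (hb : 0 ≤ b) : |a * Real.log (a / (a + b))| ≤ b := by
  rcases ha.eq_or_lt with rfl | ha'
  · simpa using hb
  · have hpos : 0 < a / (a + b) := by positivity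
    have hlog : Real.log (a / (a + b)) ≤ 0 :=
      Real.log_nonpos hpos.le (div_le_one_of_le₀ (by linarith) (by positivity))
    rw [abs_of_nonpos (mul_nonpos_of_nonneg_of_nonpos ha hlog), neg_le]
    calc -b = a * (1 - (a / (a + b))⁻¹) := by field_simp; ring
      _ ≤ a * Real.log (a / (a + b)) := by gcongr; exact Real.one_sub_inv_le_log_of_pos hpos

end Pointwise

section OptimalValue

variable {X : Type*} [MeasurableSpace X] {μ : Measure X} {p q : X → ℝ}

/-- The value of the adversarial game between an expert density `p` and a generated density `q`
at the optimal discriminator, which with the sign conventions of Triple-GAIL is `q / (p + q)`. -/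
noncomputable def optimalValue (μ : Measure X) (p q : X → ℝ) : ℝ :=
  (∫ x, p x * Real.log (p x / (p x + q x)) ∂μ) + ∫ x, q x * Real.log (q x / (p x + q x)) ∂μ

lemma integrable_left_mul_log_div_add (hp : Integrable p μ) (hq : Integrable q μ)
    (hp₀ : 0 ≤ᵐ[μ] p) (hq₀ : 0 ≤ᵐ[μ] q) :
    Integrable (fun x ↦ p x * Real.log (p x / (p x + q x))) μ := by
  have hpm := hp.aemeasurable
  have hqm := hq.aemeasurable
  refine hq.mono' (by fun_prop) ?_
  filter_upwards [hp₀, hq₀] with x hpx hqx using abs_mul_log_div_add_le hpx hqx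

lemma integrable_right_mul_log_div_add (hp : Integrable p μ) (hq : Integrable q μ)
    (hp₀ : 0 ≤ᵐ[μ] p) (hq₀ : 0 ≤ᵐ[μ] q) :
    Integrable (fun x ↦ q x * Real.log (q x / (p x + q x))) μ := by
  simpa only [add_comm] using integrable_left_mul_log_div_add hq hp hq₀ hp₀

lemma integrable_add_mul_binEntropy (hp : Integrable p μ) (hq : Integrable q μ)
    (hp₀ : 0 ≤ᵐ[μ] p) (hq₀ : 0 ≤ᵐ[μ] q) :
    Integrable (fun x ↦ (p x + q x) * Real.binEntropy (p x / (p x + q x))) μ := by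
  have hsum := (integrable_left_mul_log_div_add hp hq hp₀ hq₀).add
    (integrable_right_mul_log_div_add hp hq hp₀ hq₀)
  refine hsum.neg.congr (ae_of_all _ fun x ↦ ?_)
  simp only [Pi.neg_apply, Pi.add_apply, mul_log_div_add_add_mul_log_div_add, neg_neg]

lemma optimalValue_eq_neg_integral_binEntropy (hp : Integrable p μ) (hq : Integrable q μ)
    (hp₀ : 0 ≤ᵐ[μ] p) (hq₀ : 0 ≤ᵐ[μ] q) :
    optimalValue μ p q = -∫ x, (p x + q x) * Real.binEntropy (p x / (p x + q x)) ∂μ := by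
  rw [optimalValue, ← integral_add (integrable_left_mul_log_div_add hp hq hp₀ hq₀)
    (integrable_right_mul_log_div_add hp hq hp₀ hq₀), ← integral_neg]
  simp only [mul_log_div_add_add_mul_log_div_add]

lemma add_mul_binEntropy_ae_le (hp₀ : 0 ≤ᵐ[μ] p) (hq₀ : 0 ≤ᵐ[μ] q) :
    (fun x ↦ (p x + q x) * Real.binEntropy (p x / (p x + q x)))
      ≤ᵐ[μ] fun x ↦ (p x + q x) * Real.log 2 := by
  filter_upwards [hp₀, hq₀] with x hpx hqx
  exact mul_le_mul_of_nonneg_left Real.binEntropy_le_log_two (add_nonneg hpx hqx)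

lemma integral_add_mul_log_two (hp : Integrable p μ) (hq : Integrable q μ) :
    ∫ x, (p x + q x) * Real.log 2 ∂μ = (∫ x, p x ∂μ + ∫ x, q x ∂μ) * Real.log 2 := by
  rw [integral_mul_const, integral_add hp hq]

theorem neg_mass_mul_log_two_le_optimalValue (hp : Integrable p μ) (hq : Integrable q μ)
    (hp₀ : 0 ≤ᵐ[μ] p) (hq₀ : 0 ≤ᵐ[μ] q) :
    -((∫ x, p x ∂μ + ∫ x, q x ∂μ) * Real.log 2) ≤ optimalValue μ p q := by
  rw [optimalValue_eq_neg_integral_binEntropy hp hq hp₀ hq₀, ← integral_add_mul_log_two hp hq,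
    neg_le_neg_iff]
  exact integral_mono_ae (integrable_add_mul_binEntropy hp hq hp₀ hq₀)
    ((hp.add hq).mul_const _) (add_mul_binEntropy_ae_le hp₀ hq₀)

theorem optimalValue_eq_neg_mass_mul_log_two_iff (hp : Integrable p μ) (hq : Integrable q μ)
    (hp₀ : 0 ≤ᵐ[μ] p) (hq₀ : 0 ≤ᵐ[μ] q) :
    optimalValue μ p q = -((∫ x, p x ∂μ + ∫ x, q x ∂μ) * Real.log 2) ↔ p =ᵐ[μ] q := by
  rw [optimalValue_eq_neg_integral_binEntropy hp hq hp₀ hq₀, ← integral_add_mul_log_two hp hq,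
    neg_inj]
  refine (integral_eq_iff_of_ae_le (integrable_add_mul_binEntropy hp hq hp₀ hq₀)
    ((hp.add hq).mul_const _) (add_mul_binEntropy_ae_le hp₀ hq₀)).trans
      (Filter.eventually_congr ?_)
  filter_upwards [hp₀, hq₀] with x hpx hqx
  exact add_mul_binEntropy_eq_add_mul_log_two_iff hpx hqx

end OptimalValue

section ProbDensity

variable {X : Type*} [MeasurableSpace X] {μ : Measure X} {p q : X → ℝ}

/-- `p` is the density of a probability measure with respect to `μ`. Integrability is implied by
`integral_eq_one`, since the integral of a non-integrable function is `0`. -/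
structure IsProbDensity (μ : Measure X) (p : X → ℝ) : Prop where
  ae_nonneg : 0 ≤ᵐ[μ] p
  integral_eq_one : ∫ x, p x ∂μ = 1

lemma IsProbDensity.integrable (hp : IsProbDensity μ p) : Integrable p μ :=
  integrable_of_integral_eq_one hp.integral_eq_one

lemma convex_setOf_isProbDensity (μ : Measure X) : Convex ℝ {p | IsProbDensity μ p} := by
  intro p hp q hq s t hs ht hst
  constructor
  · filter_upwards [hp.ae_nonneg, hq.ae_nonneg] with x hpx hqx
    exact add_nonneg (mul_nonneg hs hpx) (mul_nonneg ht hqx)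
  · calc ∫ x, (s • p + t • q) x ∂μ = s * ∫ x, p x ∂μ + t * ∫ x, q x ∂μ := by
          rw [integral_add' (hp.integrable.smul s) (hq.integrable.smul t)]
          simp only [Pi.smul_apply, smul_eq_mul, integral_const_mul]
      _ = 1 := by rw [hp.integral_eq_one, hq.integral_eq_one, mul_one, mul_one, hst]

theorem optimal_value_ge_neg_log_four_general (hp : IsProbDensity μ p) (hq : IsProbDensity μ q) :
    -Real.log 4 ≤ optimalValue μ p q ∧ (optimalValue μ p q = -Real.log 4 ↔ p =ᵐ[μ] q) := by
  have hlog : Real.log 4 = (∫ x, p x ∂μ + ∫ x, q x ∂μ) * Real.log 2 := by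
    rw [hp.integral_eq_one, hq.integral_eq_one, one_add_one_eq_two, ← Real.log_rpow two_pos]
    norm_num
  rw [hlog]
  exact ⟨neg_mass_mul_log_two_le_optimalValue hp.integrable hq.integrable hp.ae_nonneg hq.ae_nonneg,
    optimalValue_eq_neg_mass_mul_log_two_iff hp.integrable hq.integrable hp.ae_nonneg hq.ae_nonneg⟩

end ProbDensity

theorem optimal_value_ge_neg_log_four
    {X : Type*} [MeasurableSpace X] (μ : Measure X) [SigmaFinite μ]
    (pE pθ pα : X → ℝ)
    (hpEm : Measurable pE) (hpE0 : ∀ x, 0 ≤ pE x) (hpE1 : ∫ x, pE x ∂μ = 1)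
    (hpθm : Measurable pθ) (hpθ0 : ∀ x, 0 ≤ pθ x) (hpθ1 : ∫ x, pθ x ∂μ = 1)
    (hpαm : Measurable pα) (hpα0 : ∀ x, 0 ≤ pα x) (hpα1 : ∫ x, pα x ∂μ = 1)
    (ω : ℝ) (hω : ω ∈ Set.Ioo (0 : ℝ) 1) :
    -Real.log 4 ≤
      (∫ x, pE x *
          Real.log (pE x / (pE x + (ω * pθ x + (1 - ω) * pα x))) ∂μ)
        + (∫ x, (ω * pθ x + (1 - ω) * pα x) *
            Real.log ((ω * pθ x + (1 - ω) * pα x) /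
              (pE x + (ω * pθ x + (1 - ω) * pα x))) ∂μ) ∧
    ((∫ x, pE x *
          Real.log (pE x / (pE x + (ω * pθ x + (1 - ω) * pα x))) ∂μ)
        + (∫ x, (ω * pθ x + (1 - ω) * pα x) *
            Real.log ((ω * pθ x + (1 - ω) * pα x) /
              (pE x + (ω * pθ x + (1 - ω) * pα x))) ∂μ)
      = -Real.log 4
      ↔ pE =ᵐ[μ] fun x => ω * pθ x + (1 - ω) * pα x) :=
  optimal_value_ge_neg_log_four_general ⟨ae_of_all μ hpE0, hpE1⟩ <| convex_setOf_isProbDensity μ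
    ⟨ae_of_all μ hpθ0, hpθ1⟩ ⟨ae_of_all μ hpα0, hpα1⟩ hω.1.le (sub_nonneg.2 hω.2.le) (by ring)
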